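/- Let w be a nonzero vector in the Euclidean plane ℝ², let A > 0 and B > 0, and define F(q) = (‖q‖² + A)(‖q − w‖² + B) for q ∈ ℝ². Then F attains a global minimum over ℝ², and every global minimizer of F is of the form κ • w for some real number κ; that is, there exists κ ∈ ℝ with F(κ • w) ≤ F(q) for all q ∈ ℝ², and any q* satisfying F(q*) ≤ F(q) for all q must equal κ* • w for some κ* ∈ ℝ. -/

import Mathlib

/-!
The orthogonal projection onto the line spanned by `w` fixes `w`, so by Pythagoras it shrinks both
`‖q‖` and `‖q - w‖`, strictly when `q` lies off the line. Hence projecting never increases the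
objective and strictly decreases it off the line. It remains to minimize over the line itself, where
a minimum exists because the objective is coercive.
-/

open Bornology Filter

/-- The numerator of the transmit power when the reflecting surface is placed at `q`, with the
paper's `Ω̃₁`, `Ω̃₂` as `A`, `B`. The parameters precede `q`, so `placementObjective A B w` is the
function to minimize. -/
def placementObjective {E : Type*} [SeminormedAddCommGroup E] (A B : ℝ) (w q : E) : ℝ :=
  (‖q‖ ^ 2 + A) * (‖q - w‖ ^ 2 + B)

section Coercivity

variable {E : Type*} [SeminormedAddCommGroup E] (A B : ℝ) (w : E)

lemma continuous_placementObjective : Continuous (placementObjective A B w) := by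
  unfold placementObjective
  fun_prop

lemma tendsto_norm_sub_sq_add_cobounded_atTop (C : ℝ) (p : E) :
    Tendsto (fun q ↦ ‖q - p‖ ^ 2 + C) (cobounded E) atTop := by
  have norm_sub_tendsto : Tendsto (fun q ↦ ‖q - p‖) (cobounded E) atTop := by
    simpa only [dist_eq_norm] using Metric.tendsto_dist_right_cobounded_atTop p
  exact tendsto_atTop_add_const_right _ C
    ((tendsto_pow_atTop two_ne_zero).comp norm_sub_tendsto)

lemma tendsto_placementObjective_cobounded_atTop :
    Tendsto (placementObjective A B w) (cobounded E) atTop := by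
  have first_factor : Tendsto (fun q : E ↦ ‖q‖ ^ 2 + A) (cobounded E) atTop := by
    simpa only [sub_zero] using tendsto_norm_sub_sq_add_cobounded_atTop A (0 : E)
  exact first_factor.atTop_mul_atTop₀ (tendsto_norm_sub_sq_add_cobounded_atTop B w)

lemma exists_forall_placementObjective_le [ProperSpace E] :
    ∃ p, ∀ q, placementObjective A B w p ≤ placementObjective A B w q :=
  (continuous_placementObjective A B w).exists_forall_le <|
    Metric.cobounded_eq_cocompact (α := E) ▸ tendsto_placementObjective_cobounded_atTop A B w

end Coercivity

section Projection

variable {𝕜 E : Type*} [RCLike 𝕜] [NormedAddCommGroup E] [InnerProductSpace 𝕜 E]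
  {K : Submodule 𝕜 E} [K.HasOrthogonalProjection] {A B : ℝ} {w q : E}

lemma norm_starProjection_lt_of_notMem (hq : q ∉ K) : ‖K.starProjection q‖ < ‖q‖ :=
  (K.norm_starProjection_apply_le q).lt_of_ne (mt (K.mem_iff_norm_starProjection q).mpr hq)

lemma norm_starProjection_sub_lt_of_notMem (hw : w ∈ K) (hq : q ∉ K) :
    ‖K.starProjection q - w‖ < ‖q - w‖ := by
  have hqw : q - w ∉ K := mt (K.sub_mem_iff_left hw).mp hq
  simpa only [map_sub, Submodule.starProjection_eq_self_iff.mpr hw] using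
    norm_starProjection_lt_of_notMem hqw

lemma placementObjective_starProjection_lt (hA : 0 ≤ A) (hB : 0 ≤ B) (hw : w ∈ K) (hq : q ∉ K) :
    placementObjective A B w (K.starProjection q) < placementObjective A B w q := by
  have norm_lt := norm_starProjection_lt_of_notMem hq
  have norm_sub_lt := norm_starProjection_sub_lt_of_notMem hw hq
  exact mul_lt_mul'' (by gcongr) (by gcongr) (by positivity) (by positivity)

lemma placementObjective_starProjection_le (hA : 0 ≤ A) (hB : 0 ≤ B) (hw : w ∈ K) (q : E) :
    placementObjective A B w (K.starProjection q) ≤ placementObjective A B w q := by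
  by_cases hq : q ∈ K
  · rw [Submodule.starProjection_eq_self_iff.mpr hq]
  · exact (placementObjective_starProjection_lt hA hB hw hq).le

lemma mem_of_forall_placementObjective_le (hA : 0 ≤ A) (hB : 0 ≤ B) (hw : w ∈ K)
    (hmin : ∀ p, placementObjective A B w q ≤ placementObjective A B w p) : q ∈ K := by
  by_contra hq
  exact (hmin _).not_gt (placementObjective_starProjection_lt hA hB hw hq)

end Projection

lemma exists_mem_forall_placementObjective_le {𝕜 E : Type*} [RCLike 𝕜] [NormedAddCommGroup E]
    [InnerProductSpace 𝕜 E] {K : Submodule 𝕜 E} [FiniteDimensional 𝕜 K] {A B : ℝ} {w : E}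
    (hA : 0 ≤ A) (hB : 0 ≤ B) (hw : w ∈ K) :
    ∃ p ∈ K, ∀ q, placementObjective A B w p ≤ placementObjective A B w q := by
  obtain ⟨p, hp⟩ := exists_forall_placementObjective_le A B (⟨w, hw⟩ : K)
  refine ⟨p, p.2, fun q ↦ ?_⟩
  calc placementObjective A B w p
    _ ≤ placementObjective A B w (K.starProjection q) := hp (K.orthogonalProjectionOnto q)
    _ ≤ placementObjective A B w q := placementObjective_starProjection_le hA hB hw q

theorem placement_objective_min_on_line_general {𝕜 E : Type*} [RCLike 𝕜] [NormedAddCommGroup E]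
    [InnerProductSpace 𝕜 E] (w : E) {A B : ℝ} (hA : 0 ≤ A) (hB : 0 ≤ B) :
    (∃ κ : 𝕜, ∀ q, placementObjective A B w (κ • w) ≤ placementObjective A B w q) ∧
      ∀ qstar, (∀ q, placementObjective A B w qstar ≤ placementObjective A B w q) →
        ∃ κstar : 𝕜, qstar = κstar • w := by
  have hw : w ∈ Submodule.span 𝕜 {w} := Submodule.mem_span_singleton_self w
  constructor
  · obtain ⟨p, hp, hmin⟩ := exists_mem_forall_placementObjective_le hA hB hw
    obtain ⟨κ, rfl⟩ := Submodule.mem_span_singleton.mp hp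
    exact ⟨κ, hmin⟩
  · intro qstar hmin
    obtain ⟨κstar, hκstar⟩ :=
      Submodule.mem_span_singleton.mp (mem_of_forall_placementObjective_le hA hB hw hmin)
    exact ⟨κstar, hκstar.symm⟩

/-- Structural core of Theorem 1. For `w ≠ 0`, `A, B > 0`, and
`F q = (‖q‖² + A)(‖q − w‖² + B)`, `F` attains a global minimum at a point of the
form `κ • w`, and every global minimizer lies on the line spanned by `w`. -/
theorem placement_objective_min_on_line
    (w : EuclideanSpace ℝ (Fin 2)) (hw : w ≠ 0)
    (A B : ℝ) (hA : 0 < A) (hB : 0 < B)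
    (F : EuclideanSpace ℝ (Fin 2) → ℝ)
    (hF : ∀ q, F q = (‖q‖ ^ 2 + A) * (‖q - w‖ ^ 2 + B)) :
    (∃ κ : ℝ, ∀ q, F (κ • w) ≤ F q) ∧
      (∀ qstar : EuclideanSpace ℝ (Fin 2),
        (∀ q, F qstar ≤ F q) → ∃ κstar : ℝ, qstar = κstar • w) := by
  obtain rfl : F = placementObjective A B w := funext hF
  exact placement_objective_min_on_line_general w hA.le hB.le
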